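/- arXiv:1712.03345 — 2 statements merged into one kernel-verified Lean document; each statement's English description precedes it below -/
import Mathlib

section
/- Let S be a homomorphism of the Fibonacci language L_F with values S_0 = S(0), S_1 = S(1). Then S(L_F) = {(S_0 − S_1)·⌊nΦ⌋ + (2S_1 − S_0)·n + S_0 − S_1 : n ≥ 1} ∪ {(S_0 − S_1)·⌊nΦ⌋ + (2S_1 − S_0)·n : n ≥ 1}, where Φ = (1+√5)/2. -/
/-- `w` is a nonempty finite factor of the infinite word `f`. -/
def IsFactor {A : Type*} (f : ℕ → A) (w : List A) : Prop :=
  w ≠ [] ∧ ∃ i : ℕ, w = (List.range w.length).map fun j => f (i + j)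

/-- The golden mean `Φ = (1+√5)/2`. -/
noncomputable def Phi : ℝ := (1 + Real.sqrt 5) / 2

/-- The Fibonacci word `c(n) = ⌊(n+2)α⌋ − ⌊(n+1)α⌋` with `α = 2 − Φ`. -/
noncomputable def fibWord (n : ℕ) : ℤ :=
  ⌊((n : ℝ) + 2) * (2 - Phi)⌋ - ⌊((n : ℝ) + 1) * (2 - Phi)⌋

/-- The infinite word `0c`: the Fibonacci word prefixed by `0`. -/
noncomputable def fibWord0 (n : ℕ) : ℤ :=
  if n = 0 then 0 else fibWord (n - 1)

/-- The infinite word `1c`: the Fibonacci word prefixed by `1`. -/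
noncomputable def fibWord1 (n : ℕ) : ℤ :=
  if n = 0 then 1 else fibWord (n - 1)

/-- The Fibonacci language: nonempty finite factors of `0c` or of `1c`. -/
def fibLang : Set (List ℤ) :=
  {w | IsFactor fibWord0 w ∨ IsFactor fibWord1 w}

/-- The homomorphism determined by `S0 = S(0)`, `S1 = S(1)`:
`S(w) = N_0(w)·S0 + N_1(w)·S1`. -/
def wordVal01 (S0 S1 : ℕ) (w : List ℤ) : ℕ :=
  w.count 0 * S0 + w.count 1 * S1

/-! With `α = 2 - Φ`, the words `0c` and `1c` are the difference sequences of `⌊nα⌋` and `⌈nα⌉`.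
Over a factor of length `n` the letters therefore telescope to `⌊(i + n)α⌋ - ⌊iα⌋` or
`⌈(i + n)α⌉ - ⌈iα⌉`, which always lies in `{⌊nα⌋, ⌈nα⌉}`, and the two prefixes of length `n` attain
both values. A word over `{0, 1}` of length `n` and letter sum `k` has `S`-value
`(n - k) S₀ + k S₁`; finally `⌈nα⌉ = 2n - ⌊nΦ⌋` and, for `n ≥ 1`, `⌊nα⌋ = 2n - ⌊nΦ⌋ - 1`. -/

section Factors

variable {A : Type*}

lemma isFactor_iff {f : ℕ → A} {w : List A} :
    IsFactor f w ↔ ∃ i n : ℕ, 1 ≤ n ∧ w = (List.range n).map fun j => f (i + j) := by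
  constructor
  · rintro ⟨hne, i, hw⟩
    exact ⟨i, w.length, List.length_pos_iff.mpr hne, hw⟩
  · rintro ⟨i, n, hn, rfl⟩
    refine ⟨?_, i, by simp only [List.length_map, List.length_range]⟩
    simpa using Nat.ne_of_gt hn

lemma IsFactor.exists_eq_of_mem {f : ℕ → A} {w : List A} (hw : IsFactor f w) {a : A}
    (ha : a ∈ w) : ∃ n, f n = a := by
  obtain ⟨i, n, -, rfl⟩ := isFactor_iff.mp hw
  obtain ⟨j, -, hj⟩ := List.mem_map.mp ha
  exact ⟨i + j, hj⟩

lemma sum_map_range_of_eq_sub [AddCommGroup A] {f H : ℕ → A} (hf : ∀ n, f n = H (n + 1) - H n)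
    (i n : ℕ) : ((List.range n).map fun j => f (i + j)).sum = H (i + n) - H i := by
  simpa only [hf, add_assoc, add_zero] using List.sum_range_sub n fun j => H (i + j)

lemma exists_isFactor_length_sum_iff [AddCommGroup A] {f H : ℕ → A}
    (hf : ∀ n, f n = H (n + 1) - H n) {n : ℕ} {s : A} :
    (∃ w, IsFactor f w ∧ w.length = n ∧ w.sum = s) ↔ 1 ≤ n ∧ ∃ i, H (i + n) - H i = s := by
  simp only [isFactor_iff, ← sum_map_range_of_eq_sub hf]
  constructor
  · rintro ⟨_, ⟨i, n, hn, rfl⟩, rfl, rfl⟩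
    simpa only [List.length_map, List.length_range] using ⟨hn, i, rfl⟩
  · rintro ⟨hn, i, rfl⟩
    exact ⟨_, ⟨i, n, hn, rfl⟩, by simp only [List.length_map, List.length_range], rfl⟩

end Factors

lemma count_smul_add_count_smul {M : Type*} [AddCommGroup M] (s₀ s₁ : M) {w : List ℤ}
    (hw : ∀ a ∈ w, a = 0 ∨ a = 1) :
    w.count 0 • s₀ + w.count 1 • s₁ = ((w.length : ℤ) - w.sum) • s₀ + w.sum • s₁ := by
  induction w with
  | nil => simp
  | cons a w ih =>
    obtain ⟨ha, hw⟩ := List.forall_mem_cons.mp hw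
    specialize ih hw
    rcases ha with rfl | rfl
    · rw [List.count_cons_self, List.count_cons_of_ne zero_ne_one, List.length_cons, List.sum_cons]
      push_cast
      linear_combination (norm := module) ih
    · rw [List.count_cons_self, List.count_cons_of_ne one_ne_zero, List.length_cons, List.sum_cons]
      push_cast
      linear_combination (norm := module) ih

section Mechanical

variable {R : Type*} [Ring R] [LinearOrder R] [FloorRing R]

/-- The lower mechanical word of slope `α` and intercept `0`, with letters in `ℤ`. -/
def lowerMechanicalWord (α : R) (n : ℕ) : ℤ := ⌊((n + 1 : ℕ) : R) * α⌋ - ⌊(n : R) * α⌋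

/-- The upper mechanical word of slope `α` and intercept `0`, with letters in `ℤ`. -/
def upperMechanicalWord (α : R) (n : ℕ) : ℤ := ⌈((n + 1 : ℕ) : R) * α⌉ - ⌈(n : R) * α⌉

/-- The language of slope `α`: nonempty finite factors of its lower or upper mechanical word. -/
def mechanicalLang (α : R) : Set (List ℤ) :=
  {w | IsFactor (lowerMechanicalWord α) w ∨ IsFactor (upperMechanicalWord α) w}

variable [IsStrictOrderedRing R]

lemma floor_add_sub_floor_mem_Icc (x y : R) : ⌊x + y⌋ - ⌊x⌋ ∈ Set.Icc ⌊y⌋ ⌈y⌉ := by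
  have lower := Int.le_floor_add x y
  have upper : ⌊x + y⌋ ≤ ⌊x⌋ + ⌈y⌉ := by
    rw [← Int.floor_add_intCast]
    gcongr
    exact Int.le_ceil y
  constructor <;> linarith

lemma ceil_add_sub_ceil_mem_Icc (x y : R) : ⌈x + y⌉ - ⌈x⌉ ∈ Set.Icc ⌊y⌋ ⌈y⌉ := by
  have lower : ⌈x⌉ + ⌊y⌋ ≤ ⌈x + y⌉ := by
    rw [← Int.ceil_add_intCast]
    gcongr
    exact Int.floor_le y
  have upper := Int.ceil_add_le x y
  constructor <;> linarith

lemma mem_Icc_floor_ceil_iff {y : R} {k : ℤ} : k ∈ Set.Icc ⌊y⌋ ⌈y⌉ ↔ k = ⌊y⌋ ∨ k = ⌈y⌉ := by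
  have := Int.floor_le_ceil y
  have := Int.ceil_le_floor_add_one y
  rw [Set.mem_Icc]
  lia

lemma eq_zero_or_one_of_mem_mechanicalLang {α : R} (h₀ : 0 ≤ α) (h₁ : α ≤ 1) {w : List ℤ}
    (hw : w ∈ mechanicalLang α) {a : ℤ} (ha : a ∈ w) : a = 0 ∨ a = 1 := by
  have hmem : a ∈ Set.Icc ⌊α⌋ ⌈α⌉ := by
    rcases hw with hw | hw
    · obtain ⟨n, rfl⟩ := hw.exists_eq_of_mem ha
      simpa only [lowerMechanicalWord, Nat.cast_succ, add_one_mul]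
        using floor_add_sub_floor_mem_Icc (n * α) α
    · obtain ⟨n, rfl⟩ := hw.exists_eq_of_mem ha
      simpa only [upperMechanicalWord, Nat.cast_succ, add_one_mul]
        using ceil_add_sub_ceil_mem_Icc (n * α) α
  have hfloor : 0 ≤ ⌊α⌋ := Int.floor_nonneg.mpr h₀
  have hceil : ⌈α⌉ ≤ 1 := Int.ceil_le.mpr (by exact_mod_cast h₁)
  rw [Set.mem_Icc] at hmem
  lia

theorem exists_mem_mechanicalLang_length_sum_iff {α : R} {n : ℕ} {k : ℤ} :
    (∃ w ∈ mechanicalLang α, w.length = n ∧ w.sum = k) ↔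
      1 ≤ n ∧ k ∈ Set.Icc ⌊(n : R) * α⌋ ⌈(n : R) * α⌉ := by
  have hlower := exists_isFactor_length_sum_iff (f := lowerMechanicalWord α)
    (H := fun n : ℕ => ⌊(n : R) * α⌋) (fun _ => rfl) (n := n) (s := k)
  have hupper := exists_isFactor_length_sum_iff (f := upperMechanicalWord α)
    (H := fun n : ℕ => ⌈(n : R) * α⌉) (fun _ => rfl) (n := n) (s := k)
  simp only [mechanicalLang, Set.mem_ofPred_eq, or_and_right, exists_or, hlower, hupper,
    ← and_or_left, Nat.cast_add, add_mul]
  refine and_congr_right fun _ => ⟨?_, fun hk => ?_⟩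
  · rintro (⟨i, rfl⟩ | ⟨i, rfl⟩)
    · exact floor_add_sub_floor_mem_Icc _ _
    · exact ceil_add_sub_ceil_mem_Icc _ _
  · exact (mem_Icc_floor_ceil_iff.mp hk).imp (fun h => ⟨0, by simp [h]⟩) fun h => ⟨0, by simp [h]⟩

theorem mechanicalLang_image {α : R} (h₀ : 0 ≤ α) (h₁ : α ≤ 1) {M : Type*} [AddCommGroup M]
    (s₀ s₁ : M) :
    {m : M | ∃ w ∈ mechanicalLang α, w.count 0 • s₀ + w.count 1 • s₁ = m} =
      {m : M | ∃ n : ℕ, 1 ≤ n ∧ ∃ k ∈ Set.Icc ⌊(n : R) * α⌋ ⌈(n : R) * α⌉,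
        ((n : ℤ) - k) • s₀ + k • s₁ = m} := by
  have hcount {w : List ℤ} (hw : w ∈ mechanicalLang α) :=
    count_smul_add_count_smul s₀ s₁ fun _ => eq_zero_or_one_of_mem_mechanicalLang h₀ h₁ hw
  ext m
  constructor
  · rintro ⟨w, hw, rfl⟩
    obtain ⟨hn, hk⟩ := exists_mem_mechanicalLang_length_sum_iff.mp ⟨w, hw, rfl, rfl⟩
    exact ⟨w.length, hn, w.sum, hk, (hcount hw).symm⟩
  · rintro ⟨n, hn, k, hk, rfl⟩
    obtain ⟨w, hw, rfl, rfl⟩ := exists_mem_mechanicalLang_length_sum_iff.mpr ⟨hn, hk⟩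
    exact ⟨w, hw, hcount hw⟩

end Mechanical

lemma ceil_eq_floor_add_one_of_irrational {x : ℝ} (hx : Irrational x) : ⌈x⌉ = ⌊x⌋ + 1 := by
  rw [Int.ceil_eq_floor_add_one_iff_notMem]
  rintro ⟨k, hk⟩
  exact hx.ne_int k hk.symm

lemma one_lt_Phi : 1 < Phi := Real.one_lt_goldenRatio

lemma Phi_lt_two : Phi < 2 := Real.goldenRatio_lt_two

lemma irrational_Phi : Irrational Phi := Real.goldenRatio_irrational

lemma floor_natCast_mul_two_sub (n : ℕ) (x : ℝ) : ⌊n * (2 - x)⌋ = 2 * n - ⌈n * x⌉ := by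
  rw [show n * (2 - x) = -(n * x) + ((2 * n : ℕ) : ℝ) by push_cast; ring, Int.floor_add_natCast,
    Int.floor_neg]
  push_cast
  ring

lemma ceil_natCast_mul_two_sub (n : ℕ) (x : ℝ) : ⌈n * (2 - x)⌉ = 2 * n - ⌊n * x⌋ := by
  rw [show n * (2 - x) = -(n * x) + ((2 * n : ℕ) : ℝ) by push_cast; ring, Int.ceil_add_natCast,
    Int.ceil_neg]
  push_cast
  ring

lemma fibWord_eq_lowerMechanicalWord (n : ℕ) :
    fibWord n = lowerMechanicalWord (2 - Phi) (n + 1) := by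
  simp only [fibWord, lowerMechanicalWord]
  push_cast
  rw [add_assoc, one_add_one_eq_two]

lemma lowerMechanicalWord_succ_eq_upperMechanicalWord {α : ℝ} (hα : Irrational α) (n : ℕ) :
    lowerMechanicalWord α (n + 1) = upperMechanicalWord α (n + 1) := by
  have hceil (k : ℕ) : ⌈((k + 1 : ℕ) : ℝ) * α⌉ = ⌊((k + 1 : ℕ) : ℝ) * α⌋ + 1 :=
    ceil_eq_floor_add_one_of_irrational (hα.natCast_mul k.succ_ne_zero)
  simp only [lowerMechanicalWord, upperMechanicalWord, hceil]
  ring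

lemma fibWord0_eq_lowerMechanicalWord : fibWord0 = lowerMechanicalWord (2 - Phi) := by
  funext n
  cases n with
  | zero =>
    have hfloor : ⌊2 - Phi⌋ = 0 :=
      Int.floor_eq_zero_iff.mpr ⟨by linarith [Phi_lt_two], by linarith [one_lt_Phi]⟩
    simp [fibWord0, lowerMechanicalWord, hfloor]
  | succ n => exact fibWord_eq_lowerMechanicalWord n

lemma fibWord1_eq_upperMechanicalWord : fibWord1 = upperMechanicalWord (2 - Phi) := by
  funext n
  cases n with
  | zero =>
    have hceil : ⌈2 - Phi⌉ = 1 :=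
      Int.ceil_eq_iff.mpr ⟨by push_cast; linarith [Phi_lt_two], by push_cast; linarith [one_lt_Phi]⟩
    simp [fibWord1, upperMechanicalWord, hceil]
  | succ n =>
    exact (fibWord_eq_lowerMechanicalWord n).trans
      (lowerMechanicalWord_succ_eq_upperMechanicalWord
        (by exact_mod_cast irrational_Phi.natCast_sub 2) n)

lemma fibLang_eq_mechanicalLang : fibLang = mechanicalLang (2 - Phi) := by
  rw [fibLang, fibWord0_eq_lowerMechanicalWord, fibWord1_eq_upperMechanicalWord, mechanicalLang]

theorem fib_image_general {M : Type*} [AddCommGroup M] (s₀ s₁ : M) :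
    {m : M | ∃ w ∈ fibLang, w.count 0 • s₀ + w.count 1 • s₁ = m} =
      {m : M | ∃ n : ℕ, 1 ≤ n ∧
        (m = ⌊(n : ℝ) * Phi⌋ • (s₀ - s₁) + n • (2 • s₁ - s₀) + s₀ - s₁ ∨
         m = ⌊(n : ℝ) * Phi⌋ • (s₀ - s₁) + n • (2 • s₁ - s₀))} := by
  rw [fibLang_eq_mechanicalLang, mechanicalLang_image (by linarith [Phi_lt_two])
    (by linarith [one_lt_Phi])]
  simp only [mem_Icc_floor_ceil_iff, or_and_right, exists_or, exists_eq_left]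
  ext m
  refine exists_congr fun n => and_congr_right fun hn => ?_
  have hceil := ceil_eq_floor_add_one_of_irrational
    (irrational_Phi.natCast_mul (Nat.ne_of_gt hn))
  rw [floor_natCast_mul_two_sub, ceil_natCast_mul_two_sub, hceil]
  refine or_congr ?_ ?_ <;> rw [eq_comm] <;> refine Eq.congr_right ?_ <;> module

theorem fib_image (S0 S1 : ℕ) (hS0 : 0 < S0) (hS1 : 0 < S1) :
    {m : ℕ | ∃ w ∈ fibLang, wordVal01 S0 S1 w = m} =
      {m : ℕ | ∃ n : ℕ, 1 ≤ n ∧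
        ((m : ℤ) = ((S0 : ℤ) - S1) * ⌊(n : ℝ) * Phi⌋ + (2 * S1 - S0) * n + S0 - S1 ∨
         (m : ℤ) = ((S0 : ℤ) - S1) * ⌊(n : ℝ) * Phi⌋ + (2 * S1 - S0) * n)} := by
  ext m
  have himage := Set.ext_iff.mp (fib_image_general (S0 : ℤ) S1) m
  simpa [wordVal01, ← Nat.cast_inj (R := ℤ), mul_comm] using himage
end

section
/- Let S be a homomorphism of the Thue–Morse language L_TM with values p = S(a), q = S(b), and set r = p + q. Then S(L_TM) = {(n+1)·r : n ≥ 0} ∪ {n·r + p : n ≥ 0} ∪ {n·r + q : n ≥ 0} ∪ {n·r + 2p : n ≥ 0} ∪ {n·r + 2q : n ≥ 0}; that is, the image is the union of five arithmetic progressions of common difference r = p + q, with first terms r, p, q, 2p and 2q respectively. -/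
/-- The Thue–Morse morphism `a ↦ ab`, `b ↦ ba` (here `a = false`, `b = true`),
extended to words by concatenation. -/
def tmMorph (w : List Bool) : List Bool :=
  w.flatMap fun x => if x then [true, false] else [false, true]

/-- The Thue–Morse word: the fixed point beginning with `a` of the Thue–Morse
morphism (the `n`-th letter is read off from a sufficiently high iterate on `a`). -/
def tmWord (n : ℕ) : Bool :=
  (tmMorph^[n + 1] [false]).getD n false

/-- The Thue–Morse language: nonempty finite factors of the Thue–Morse word. -/
def tmLang : Set (List Bool) :=
  {w | IsFactor tmWord w}

/-- The homomorphism determined by `p = S(a)`, `q = S(b)`: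
`S(w) = N_a(w)·p + N_b(w)·q`. -/
def wordValTM (p q : ℕ) (w : List Bool) : ℕ :=
  w.count false * p + w.count true * q

/-!
A factor of the Thue–Morse word `t` is the image under the morphism of a possibly empty factor, up
to at most one extra letter at each end. As both `ab` and `ba` contain each letter once, the numbers
of `a`s and `b`s in a factor differ by at most 2. Conversely, the recursion `t (2n) = t n`,
`t (2n+1) = !t n` shows that any two letters occur in `t` at any prescribed positive distance, so
the extra letters can be chosen freely, and every nonzero such pair of letter counts is realised.
-/

theorem tmMorph_cons (x : Bool) (w : List Bool) : tmMorph (x :: w) = x :: (!x) :: tmMorph w := by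
  cases x <;> rfl

theorem count_tmMorph (c : Bool) (w : List Bool) : (tmMorph w).count c = w.length := by
  induction w with
  | nil => rfl
  | cons x w ih => cases x <;> cases c <;> simp [tmMorph_cons, ih]

theorem length_tmMorph (w : List Bool) : (tmMorph w).length = 2 * w.length := by
  rw [← List.count_true_add_count_false, count_tmMorph, count_tmMorph, two_mul]

theorem getElem?_tmMorph_two_mul : ∀ (w : List Bool) (n : ℕ), (tmMorph w)[2 * n]? = w[n]?
  | [], _ => rfl
  | x :: w, 0 => by simp [tmMorph_cons]
  | x :: w, n + 1 => by simpa [tmMorph_cons, mul_add] using getElem?_tmMorph_two_mul w n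

theorem getElem?_tmMorph_two_mul_add_one :
    ∀ (w : List Bool) (n : ℕ), (tmMorph w)[2 * n + 1]? = w[n]?.map not
  | [], _ => rfl
  | x :: w, 0 => by simp [tmMorph_cons]
  | x :: w, n + 1 => by simpa [tmMorph_cons, mul_add] using getElem?_tmMorph_two_mul_add_one w n

theorem length_iterate_tmMorph (k : ℕ) (w : List Bool) :
    (tmMorph^[k] w).length = 2 ^ k * w.length := by
  induction k with
  | zero => simp
  | succ k ih => rw [Function.iterate_succ_apply', length_tmMorph, ih, pow_succ', mul_assoc]

theorem iterate_tmMorph_prefix_iterate {w : List Bool} (hw : w <+: tmMorph w) {k l : ℕ}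
    (hkl : k ≤ l) : tmMorph^[k] w <+: tmMorph^[l] w := by
  have prefix_succ (k : ℕ) : tmMorph^[k] w <+: tmMorph^[k + 1] w := by
    induction k with
    | zero => exact hw
    | succ k ih =>
      simp only [Function.iterate_succ_apply'] at ih ⊢
      exact ih.flatMap _
  induction l, hkl using Nat.le_induction with
  | base => exact List.prefix_rfl
  | succ l _ ih => exact ih.trans (prefix_succ l)

theorem getElem?_iterate_tmMorph {k n : ℕ} (hnk : n < k) :
    (tmMorph^[k] [false])[n]? = some (tmWord n) := by
  have hn : n < (tmMorph^[n + 1] [false]).length := by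
    rw [length_iterate_tmMorph, List.length_singleton, mul_one]
    exact n.lt_succ_self.trans Nat.lt_two_pow_self
  have hprefix : tmMorph^[n + 1] [false] <+: tmMorph^[k] [false] :=
    iterate_tmMorph_prefix_iterate ⟨[true], rfl⟩ hnk
  rw [List.prefix_iff_getElem?.mp hprefix n hn, tmWord, List.getD_eq_getElem _ _ hn]

theorem tmWord_two_mul (n : ℕ) : tmWord (2 * n) = tmWord n := by
  have h := getElem?_iterate_tmMorph (show 2 * n < 2 * n + 1 + 1 by lia)
  rw [Function.iterate_succ_apply', getElem?_tmMorph_two_mul,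
    getElem?_iterate_tmMorph (by lia)] at h
  exact (Option.some.inj h).symm

theorem tmWord_two_mul_add_one (n : ℕ) : tmWord (2 * n + 1) = !tmWord n := by
  have h := getElem?_iterate_tmMorph (show 2 * n + 1 < 2 * n + 1 + 1 by lia)
  rw [Function.iterate_succ_apply', getElem?_tmMorph_two_mul_add_one,
    getElem?_iterate_tmMorph (by lia)] at h
  exact (Option.some.inj h).symm

theorem exists_tmWord_eq_and_tmWord_succ_eq (x y : Bool) :
    ∃ i, tmWord i = x ∧ tmWord (i + 1) = y := by
  cases x <;> cases y
  · exact ⟨5, by decide⟩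
  · exact ⟨0, by decide⟩
  · exact ⟨2, by decide⟩
  · exact ⟨1, by decide⟩

theorem exists_tmWord_eq_and_tmWord_add_eq {d : ℕ} (hd : 0 < d) (x y : Bool) :
    ∃ i, tmWord i = x ∧ tmWord (i + d) = y := by
  induction d using Nat.strong_induction_on generalizing y with
  | _ d ih =>
    obtain ⟨e, rfl | rfl⟩ := d.even_or_odd'
    · obtain ⟨i, hx, hy⟩ := ih e (by lia) (by lia) y
      exact ⟨2 * i, by rw [tmWord_two_mul, hx], by rw [← mul_add, tmWord_two_mul, hy]⟩
    · obtain rfl | he := e.eq_zero_or_pos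
      · exact exists_tmWord_eq_and_tmWord_succ_eq x y
      · obtain ⟨i, hx, hy⟩ := ih e (by lia) he (!y)
        refine ⟨2 * i, by rw [tmWord_two_mul, hx], ?_⟩
        rw [← add_assoc, ← mul_add, tmWord_two_mul_add_one, hy, Bool.not_not]

/-- The factor `f i, f (i + 1), …, f (i + l - 1)` of the infinite word `f`, given by its position
and length; unlike in `IsFactor`, it may be empty. -/
def factorAt {A : Type*} (f : ℕ → A) (i l : ℕ) : List A :=
  (List.range l).map fun j => f (i + j)

section factorAt

variable {A : Type*} (f : ℕ → A) (i l : ℕ)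

theorem length_factorAt : (factorAt f i l).length = l := by
  simp [factorAt]

theorem factorAt_succ_eq_cons : factorAt f i (l + 1) = f i :: factorAt f (i + 1) l := by
  simp [factorAt, List.range_succ_eq_map, Function.comp_def, add_assoc, add_comm 1]

theorem factorAt_succ_eq_append : factorAt f i (l + 1) = factorAt f i l ++ [f (i + l)] := by
  simp [factorAt, List.range_succ]

theorem isFactor_factorAt_succ : IsFactor f (factorAt f i (l + 1)) :=
  ⟨by simp [factorAt_succ_eq_cons], i, by rw [length_factorAt, factorAt]⟩

end factorAt

theorem factorAt_tmWord_even_even (i n : ℕ) :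
    factorAt tmWord (2 * i) (2 * n) = tmMorph (factorAt tmWord i n) := by
  induction n generalizing i with
  | zero => rfl
  | succ n ih =>
    rw [mul_add, mul_one, factorAt_succ_eq_cons, factorAt_succ_eq_cons, add_assoc, ← mul_add_one,
      ih, tmWord_two_mul, tmWord_two_mul_add_one, ← tmMorph_cons, ← factorAt_succ_eq_cons]

theorem factorAt_tmWord_even_odd (i n : ℕ) :
    factorAt tmWord (2 * i) (2 * n + 1) =
      tmMorph (factorAt tmWord i n) ++ [tmWord (i + n)] := by
  rw [factorAt_succ_eq_append, factorAt_tmWord_even_even, ← mul_add, tmWord_two_mul]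

theorem factorAt_tmWord_odd_odd (i n : ℕ) :
    factorAt tmWord (2 * i + 1) (2 * n + 1) =
      (!tmWord i) :: tmMorph (factorAt tmWord (i + 1) n) := by
  rw [factorAt_succ_eq_cons, tmWord_two_mul_add_one, add_assoc, ← mul_add_one,
    factorAt_tmWord_even_even]

theorem factorAt_tmWord_odd_even (i n : ℕ) :
    factorAt tmWord (2 * i + 1) (2 * n + 2) =
      (!tmWord i) :: (tmMorph (factorAt tmWord (i + 1) n) ++ [tmWord (i + (n + 1))]) := by
  rw [factorAt_succ_eq_cons, tmWord_two_mul_add_one, add_assoc, ← mul_add_one,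
    factorAt_tmWord_even_odd, add_right_comm, add_assoc]

theorem exists_eq_append_tmMorph_append_of_mem_tmLang {w : List Bool} (hw : w ∈ tmLang) :
    ∃ s u v, w = s ++ tmMorph u ++ v ∧ s.length ≤ 1 ∧ v.length ≤ 1 := by
  obtain ⟨hne, j, hj⟩ := hw
  obtain ⟨l, hl⟩ := Nat.exists_eq_succ_of_ne_zero (List.length_pos_iff.mpr hne).ne'
  replace hj : w = factorAt tmWord j (l + 1) := by rwa [hl] at hj
  obtain ⟨i, rfl | rfl⟩ := j.even_or_odd' <;> obtain ⟨n, rfl | rfl⟩ := l.even_or_odd'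
  · exact ⟨[], _, [_], hj.trans (factorAt_tmWord_even_odd i n), by simp, by simp⟩
  · exact ⟨[], _, [], by simpa using hj.trans (factorAt_tmWord_even_even i (n + 1)),
      by simp, by simp⟩
  · exact ⟨[_], _, [], by simpa using hj.trans (factorAt_tmWord_odd_odd i n), by simp, by simp⟩
  · exact ⟨[_], _, [_], hj.trans (factorAt_tmWord_odd_even i n), by simp, by simp⟩

theorem count_le_count_add_two_of_mem_tmLang {w : List Bool} (hw : w ∈ tmLang) (c d : Bool) :
    w.count c ≤ w.count d + 2 := by
  obtain ⟨s, u, v, rfl, hs, hv⟩ := exists_eq_append_tmMorph_append_of_mem_tmLang hw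
  have hsc : s.count c ≤ 1 := List.count_le_length.trans hs
  have hvc : v.count c ≤ 1 := List.count_le_length.trans hv
  simp only [List.count_append, count_tmMorph]
  lia

theorem exists_cons_tmMorph_mem_tmLang (x : Bool) (n : ℕ) :
    ∃ u, u.length = n ∧ x :: tmMorph u ∈ tmLang := by
  obtain ⟨i, hx, -⟩ := exists_tmWord_eq_and_tmWord_succ_eq (!x) x
  refine ⟨factorAt tmWord (i + 1) n, length_factorAt _ _ _, ?_⟩
  have hmem := isFactor_factorAt_succ tmWord (2 * i + 1) (2 * n)
  rwa [factorAt_tmWord_odd_odd, hx, Bool.not_not] at hmem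

theorem exists_cons_tmMorph_append_mem_tmLang (x y : Bool) (n : ℕ) :
    ∃ u, u.length = n ∧ x :: (tmMorph u ++ [y]) ∈ tmLang := by
  obtain ⟨i, hx, hy⟩ := exists_tmWord_eq_and_tmWord_add_eq n.succ_pos (!x) y
  refine ⟨factorAt tmWord (i + 1) n, length_factorAt _ _ _, ?_⟩
  have hmem := isFactor_factorAt_succ tmWord (2 * i + 1) (2 * n + 1)
  rwa [factorAt_tmWord_odd_even, hx, hy, Bool.not_not] at hmem

theorem exists_mem_tmLang_count_eq_iff {a b : ℕ} :
    (∃ w ∈ tmLang, w.count false = a ∧ w.count true = b) ↔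
      ∃ n, a = n + 1 ∧ b = n + 1 ∨ a = n + 1 ∧ b = n ∨ a = n ∧ b = n + 1 ∨
        a = n + 2 ∧ b = n ∨ a = n ∧ b = n + 2 := by
  constructor
  · rintro ⟨w, hw, rfl, rfl⟩
    have hpos : 0 < w.count false + w.count true := by
      rw [List.count_false_add_count_true]
      exact List.length_pos_iff.mpr hw.1
    have hle := count_le_count_add_two_of_mem_tmLang hw false true
    have hge := count_le_count_add_two_of_mem_tmLang hw true false
    exact ⟨(w.count false + w.count true - 1) / 2, by lia⟩
  · rintro ⟨n, ⟨ha, hb⟩ | ⟨ha, hb⟩ | ⟨ha, hb⟩ | ⟨ha, hb⟩ | ⟨ha, hb⟩⟩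
    · obtain ⟨u, hu, hw⟩ := exists_cons_tmMorph_append_mem_tmLang false true n
      exact ⟨_, hw, by simp [count_tmMorph, hu, ha, hb]⟩
    · obtain ⟨u, hu, hw⟩ := exists_cons_tmMorph_mem_tmLang false n
      exact ⟨_, hw, by simp [count_tmMorph, hu, ha, hb]⟩
    · obtain ⟨u, hu, hw⟩ := exists_cons_tmMorph_mem_tmLang true n
      exact ⟨_, hw, by simp [count_tmMorph, hu, ha, hb]⟩
    · obtain ⟨u, hu, hw⟩ := exists_cons_tmMorph_append_mem_tmLang false false n
      exact ⟨_, hw, by simp [count_tmMorph, hu, ha, hb]⟩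
    · obtain ⟨u, hu, hw⟩ := exists_cons_tmMorph_append_mem_tmLang true true n
      exact ⟨_, hw, by simp [count_tmMorph, hu, ha, hb]⟩

theorem tm_image_general {M : Type*} [AddCommMonoid M] (p q r : M) (hr : r = p + q) :
    {m : M | ∃ w ∈ tmLang, w.count false • p + w.count true • q = m} =
      {m : M | ∃ n : ℕ, m = (n + 1) • r ∨ m = n • r + p ∨ m = n • r + q ∨
        m = n • r + 2 • p ∨ m = n • r + 2 • q} := by
  subst hr
  ext m
  have image_iff_counts : (∃ w ∈ tmLang, w.count false • p + w.count true • q = m) ↔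
      ∃ a b : ℕ, (∃ w ∈ tmLang, w.count false = a ∧ w.count true = b) ∧ a • p + b • q = m :=
    ⟨fun ⟨w, hw, hm⟩ ↦ ⟨_, _, ⟨w, hw, rfl, rfl⟩, hm⟩,
      fun ⟨_, _, ⟨w, hw, ha, hb⟩, hm⟩ ↦ ⟨w, hw, by rw [ha, hb, hm]⟩⟩
  refine image_iff_counts.trans ?_
  simp only [exists_mem_tmLang_count_eq_iff]
  constructor
  · rintro ⟨a, b, ⟨n, hab⟩, rfl⟩
    refine ⟨n, ?_⟩
    obtain ⟨ha, hb⟩ | ⟨ha, hb⟩ | ⟨ha, hb⟩ | ⟨ha, hb⟩ | ⟨ha, hb⟩ := hab <;> rw [ha, hb]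
    · left; module
    · right; left; module
    · right; right; left; module
    · right; right; right; left; module
    · right; right; right; right; module
  · rintro ⟨n, rfl | rfl | rfl | rfl | rfl⟩
    · exact ⟨n + 1, n + 1, ⟨n, by simp⟩, by module⟩
    · exact ⟨n + 1, n, ⟨n, by simp⟩, by module⟩
    · exact ⟨n, n + 1, ⟨n, by simp⟩, by module⟩
    · exact ⟨n + 2, n, ⟨n, by simp⟩, by module⟩
    · exact ⟨n, n + 2, ⟨n, by simp⟩, by module⟩

theorem tm_image (p q : ℕ) (hp : 0 < p) (hq : 0 < q) (r : ℕ) (hr : r = p + q) :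
    {m : ℕ | ∃ w ∈ tmLang, wordValTM p q w = m} =
      {m : ℕ | ∃ n : ℕ, m = (n + 1) * r ∨ m = n * r + p ∨ m = n * r + q ∨
        m = n * r + 2 * p ∨ m = n * r + 2 * q} := by
  simpa only [wordValTM, smul_eq_mul] using tm_image_general p q r hr
end
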